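/- Fix 0 < a < 1 and let ω = (q_n)_{n≥1} with q_n = aⁿ. Then for every k ≥ 0, every connected component of [0,1] ∖ E_{k+1}(ω) has length at least 2 a^{k+1} ℓ_{k+1}; equivalently, for any two distinct strings s, t ∈ {0,1}^{k+1} the distance between I_{k+1}(s) and I_{k+1}(t) is at least 2 a^{k+1} ℓ_{k+1}. -/

import Mathlib

open Set Filter

/-- `ℓ_k = 2^{-k} ∏_{j=1}^k (1 - q_j)` (here `q` is 0-indexed: `q 0` is `q_1`). -/
noncomputable def cantorLen (q : ℕ → ℝ) (k : ℕ) : ℝ :=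
  (∏ j ∈ Finset.range k, (1 - q j)) / 2 ^ k

/-- Left endpoint `a_k(s) = ∑_{j=1}^k s_j (ℓ_{j-1} - ℓ_j)` of the interval `I_k(s)`. -/
noncomputable def cantorPt (q : ℕ → ℝ) {k : ℕ} (s : Fin k → Bool) : ℝ :=
  ∑ j : Fin k, if s j then cantorLen q j - cantorLen q (j + 1) else 0

/-- The level-`k` closed interval `I_k(s) = [a_k(s), a_k(s) + ℓ_k]`. -/
noncomputable def cantorInterval (q : ℕ → ℝ) {k : ℕ} (s : Fin k → Bool) : Set ℝ :=
  Icc (cantorPt q s) (cantorPt q s + cantorLen q k)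

/-- The level-`k` set `E_k(ω) = ⋃_{s ∈ {0,1}^k} I_k(s)`. -/
noncomputable def cantorLevel (q : ℕ → ℝ) (k : ℕ) : Set ℝ :=
  ⋃ s : Fin k → Bool, cantorInterval q s

/-- The random Cantor set `E(ω) = ⋂_k E_k(ω)`. -/
noncomputable def randomCantorSet (q : ℕ → ℝ) : Set ℝ :=
  ⋂ k : ℕ, cantorLevel q k

theorem cantorLen_geom_succ (a : ℝ) (k : ℕ) :
    2 * cantorLen (fun n => a ^ (n + 1)) (k + 1)
      = cantorLen (fun n => a ^ (n + 1)) k * (1 - a ^ (k + 1)) := by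
  unfold cantorLen
  rw [Finset.prod_range_succ, pow_succ]
  field_simp

theorem cantorLen_geom_pos (a : ℝ) (ha0 : 0 < a) (ha1 : a < 1) (k : ℕ) :
    0 < cantorLen (fun n => a ^ (n + 1)) k := by
  unfold cantorLen
  apply div_pos _ (by positivity)
  apply Finset.prod_pos
  intro j _
  have := pow_lt_one₀ ha0.le ha1 (Nat.succ_ne_zero j)
  simpa using this

theorem cantorPt_snoc (q : ℕ → ℝ) (k : ℕ) (s : Fin (k + 1) → Bool) :
    cantorPt q s = cantorPt q (fun j : Fin k => s j.castSucc)
      + if s (Fin.last k) then cantorLen q k - cantorLen q (k + 1) else 0 := by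
  unfold cantorPt
  rw [Fin.sum_univ_castSucc]
  simp

theorem cantor_gap_aux (a : ℝ) (ha0 : 0 < a) (ha1 : a < 1) (k : ℕ) :
    ∀ s t : Fin k → Bool, s ≠ t →
    ∀ x ∈ cantorInterval (fun n => a ^ (n + 1)) s,
      ∀ y ∈ cantorInterval (fun n => a ^ (n + 1)) t,
        2 * a ^ k * cantorLen (fun n => a ^ (n + 1)) k ≤ |x - y| := by
  induction k with
  | zero => intro s t h; exact absurd (Subsingleton.elim s t) h
  | succ k ih =>
    intro s t hst x hx y hy
    have hl := cantorLen_geom_succ a k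
    have h0 := cantorLen_geom_pos a ha0 ha1 k
    have h1 := cantorLen_geom_pos a ha0 ha1 (k + 1)
    have hp : 0 < a ^ (k + 1) := by positivity
    have hp1 : a ^ (k + 1) ≤ a ^ k := pow_le_pow_of_le_one ha0.le ha1.le (Nat.le_succ k)
    have ih' := ih (fun j => s j.castSucc) (fun j => t j.castSucc)
    unfold cantorInterval at hx hy ih'
    rw [cantorPt_snoc] at hx hy
    generalize cantorLen (fun n => a ^ (n + 1)) k = L at *
    generalize cantorLen (fun n => a ^ (n + 1)) (k + 1) = M at *
    have hML : 2 * M ≤ L := by nlinarith [mul_pos h0 hp]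
    have hgap : 2 * a ^ (k + 1) * M ≤ L - 2 * M := by
      nlinarith [mul_le_mul_of_nonneg_left hML hp.le]
    simp only [mem_Icc] at hx hy ih'
    by_cases h : (fun j : Fin k => s j.castSucc) = (fun j : Fin k => t j.castSucc)
    · have hlast : s (Fin.last k) ≠ t (Fin.last k) := by
        intro hl
        apply hst
        funext j
        refine Fin.lastCases hl (fun i => congrFun h i) j
      rw [h] at hx
      rcases hs : s (Fin.last k) <;> rcases ht : t (Fin.last k) <;>
        simp [hs, ht] at hx hy hlast
      · rw [abs_sub_comm]
        exact le_trans (by linarith) (le_abs_self _)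
      · exact le_trans (by linarith) (le_abs_self _)
    · refine le_trans ?_ (ih' h x ?_ y ?_)
      · have : a ^ (k + 1) * M ≤ a ^ k * L := by
          apply mul_le_mul hp1 (by linarith) h1.le (by positivity)
        linarith
      · split_ifs at hx <;> constructor <;> linarith
      · split_ifs at hy <;> constructor <;> linarith

/-- Fix 0 < a < 1 and let ω = (q_n) with q_n = aⁿ. For every k ≥ 0 and any
two distinct strings s, t ∈ {0,1}^{k+1}, the distance between I_{k+1}(s) and I_{k+1}(t)
is at least 2 a^{k+1} ℓ_{k+1}. -/
theorem cantorIntervals_gap_geometric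
    (a : ℝ) (ha0 : 0 < a) (ha1 : a < 1) (k : ℕ)
    (s t : Fin (k + 1) → Bool) (hst : s ≠ t) :
    ∀ x ∈ cantorInterval (fun n => a ^ (n + 1)) s,
      ∀ y ∈ cantorInterval (fun n => a ^ (n + 1)) t,
        2 * a ^ (k + 1) * cantorLen (fun n => a ^ (n + 1)) (k + 1) ≤ |x - y| := by
  exact cantor_gap_aux a ha0 ha1 (k + 1) s t hst
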